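/- arXiv:1412.4664 — 4 statements merged into one kernel-verified Lean document; each statement's English description precedes it below -/
import Mathlib

section
/- The integral of m over the closed half-plane {(x,y) ∈ ℝ² : y ≥ x} equals 1/12; in particular it is nonzero. (This integral computes, up to the paper's orientation conventions under which the value is recorded as −1/12, the scalar by which the obstruction attached to the genus-two generator of the homotopy Frobenius properad acts on H•(S¹); its nonvanishing is the heart of the proof that the 1-shifted Frobenius algebra structure on H•(S¹) admits no quasilocal properadic lift to the de Rham cochains.) -/
/-!
Put `g = φ F` and `G = F ^ 2 / 2`, so that `G' = g`. Everything in sight is bounded with bounded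
support, so Fubini applies freely (`integrable_of_bdd`). Integrating first over `x ≤ y` turns
`φ (x - u)` into `F (y - u)`, and the half-plane integral becomes
`∫∫ g (y - u) (φ u (F y - F u) + φ y (F u - Θ u)) du dy`.
Adding and subtracting `G (y - u) φ u φ y`, the integrand is a sum of four terms:

* `φ u * ∂_y (G (y - u) F y)`, with integral `1 / 2`;
* `-(g (y - u) * g u)`, with integral `-(1 / 4)`;
* `φ y * ∂_u (-G (y - u) F u)`, with integral `0`;
* `-(g (y - u) φ y Θ u)`, which integrates over `u > 0` to `-(φ y * G y) = -(F ^ 3 / 6)' y`,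
  hence has integral `-(1 / 6)`.

The total is `1 / 2 - 1 / 4 - 1 / 6 = 1 / 12`. The one-variable integrals are all instances of the
fundamental theorem of calculus for functions constant near `-∞` and near `+∞`
(`step_integral`).
-/

open MeasureTheory Set

/-- `f` is a bounded real function. -/
def Bd {X : Type*} (f : X → ℝ) : Prop := ∃ C, ∀ x, |f x| ≤ C

lemma Bd.mul {X : Type*} {f g : X → ℝ} (hf : Bd f) (hg : Bd g) : Bd (fun x => f x * g x) := by
  obtain ⟨C, hC⟩ := hf
  obtain ⟨D, hD⟩ := hg
  refine ⟨C * D, fun x => ?_⟩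
  rw [abs_mul]
  exact mul_le_mul (hC x) (hD x) (abs_nonneg _) ((abs_nonneg _).trans (hC x))

lemma Bd.add {X : Type*} {f g : X → ℝ} (hf : Bd f) (hg : Bd g) : Bd (fun x => f x + g x) := by
  obtain ⟨C, hC⟩ := hf
  obtain ⟨D, hD⟩ := hg
  exact ⟨C + D, fun x => (abs_add_le _ _).trans (add_le_add (hC x) (hD x))⟩

lemma Bd.neg {X : Type*} {f : X → ℝ} (hf : Bd f) : Bd (fun x => - f x) := by
  obtain ⟨C, hC⟩ := hf
  exact ⟨C, fun x => by rw [abs_neg]; exact hC x⟩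

lemma Bd.sub {X : Type*} {f g : X → ℝ} (hf : Bd f) (hg : Bd g) : Bd (fun x => f x - g x) := by
  simpa only [sub_eq_add_neg] using hf.add hg.neg

lemma Bd.comp {X Y : Type*} {f : Y → ℝ} (hf : Bd f) (h : X → Y) : Bd (fun x => f (h x)) := by
  obtain ⟨C, hC⟩ := hf
  exact ⟨C, fun x => hC _⟩

/-- A bounded measurable function with bounded support is integrable. -/
lemma integrable_of_bdd {X : Type*} [NormedAddCommGroup X] [ProperSpace X] [MeasurableSpace X]
    {μ : Measure X} [IsFiniteMeasureOnCompacts μ] {f : X → ℝ} (hm : Measurable f) (hb : Bd f)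
    (R : ℝ) (hs : ∀ p, f p ≠ 0 → ‖p‖ ≤ R) : Integrable f μ := by
  obtain ⟨C, hC⟩ := hb
  rw [← integrableOn_iff_integrable_of_support_subset (s := Metric.closedBall (0 : X) R)]
  · exact Measure.integrableOn_of_bounded (isCompact_closedBall _ _).measure_lt_top.ne
      hm.aestronglyMeasurable (Filter.Eventually.of_forall hC)
  · intro p hp
    simpa using hs p hp

/-- If `f` is `a` on `(-∞, -R]` and `b` on `[R, ∞)`, then `f'` is integrable with total
integral `b - a`. -/
lemma step_integral {f f' : ℝ → ℝ} {a b R : ℝ} (hd : ∀ x, HasDerivAt f (f' x) x)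
    (hc : Continuous f') (ha : ∀ x ≤ -R, f x = a) (hb : ∀ x ≥ R, f x = b) :
    Integrable f' ∧ ∫ x, f' x = b - a := by
  have hi : Integrable f' := by
    refine hc.integrable_of_hasCompactSupport
      (HasCompactSupport.intro (K := Icc (-R) R) isCompact_Icc fun x hx => ?_)
    rw [mem_Icc, not_and_or, not_le, not_le] at hx
    rcases hx with hx | hx
    · refine (hd x).unique ((hasDerivAt_const x a).congr_of_eventuallyEq ?_)
      filter_upwards [Iio_mem_nhds hx] with z hz using ha z (le_of_lt hz)
    · refine (hd x).unique ((hasDerivAt_const x b).congr_of_eventuallyEq ?_)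
      filter_upwards [Ioi_mem_nhds hx] with z hz using hb z (le_of_lt hz)
  refine ⟨hi, integral_of_hasDerivAt_of_tendsto hd hi ?_ ?_⟩
  · refine tendsto_const_nhds.congr' ?_
    filter_upwards [Filter.eventually_le_atBot (-R)] with x hx using (ha x hx).symm
  · refine tendsto_const_nhds.congr' ?_
    filter_upwards [Filter.eventually_ge_atTop R] with x hx using (hb x hx).symm

/-- `F` is a smoothed Heaviside function, rising from `0` to `1` on `[-ε, ε]`, with
continuous derivative `φ`. -/
structure IsStep (ε : ℝ) (φ F : ℝ → ℝ) : Prop where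
  cont : Continuous φ
  supp : ∀ x, φ x ≠ 0 → |x| ≤ ε
  deriv : ∀ x, HasDerivAt F (φ x) x
  low : ∀ x ≤ -ε, F x = 0
  high : ∀ x ≥ ε, F x = 1
  bdφ : Bd φ
  bdF : Bd F

lemma isStep_of_cutoff {ε : ℝ} {φ F : ℝ → ℝ} (hφ : Continuous φ)
    (hφsupp : Function.support φ ⊆ Ioo (-ε) ε) (hφint : (∫ t, φ t) = 1)
    (hF : ∀ x, F x = ∫ t in Iic x, φ t) : IsStep ε φ F := by
  have hz : ∀ x, x ∉ Ioo (-ε) ε → φ x = 0 := fun x hx => by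
    by_contra h
    exact hx (hφsupp h)
  have hcs : HasCompactSupport φ :=
    HasCompactSupport.intro (K := Icc (-ε) ε) isCompact_Icc
      fun x hx => hz x fun h => hx (Ioo_subset_Icc_self h)
  have hi : Integrable φ := hφ.integrable_of_hasCompactSupport hcs
  refine ⟨hφ, fun x hx => ?_, fun x => ?_, fun x hx => ?_, fun x hx => ?_, ?_, ?_⟩
  · have := hφsupp hx
    exact abs_le.2 ⟨this.1.le, this.2.le⟩
  · have h1 : F = fun x => (∫ t in Iic 0, φ t) + ∫ t in (0 : ℝ)..x, φ t := by
      funext x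
      rw [hF, ← intervalIntegral.integral_Iic_sub_Iic hi.integrableOn hi.integrableOn]
      ring
    rw [h1]
    exact (intervalIntegral.integral_hasDerivAt_right (hφ.intervalIntegrable _ _)
      (hφ.stronglyMeasurableAtFilter _ _) hφ.continuousAt).const_add _
  · rw [hF]
    refine setIntegral_eq_zero_of_forall_eq_zero fun t ht => hz t fun h => ?_
    exact absurd h.1 (not_lt.2 (le_trans ht hx))
  · rw [hF, ← hφint]
    refine setIntegral_eq_integral_of_forall_compl_eq_zero fun t ht => hz t fun h => ?_
    exact ht (h.2.le.trans hx)
  · obtain ⟨C, hC⟩ := hcs.exists_bound_of_continuous hφ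
    exact ⟨C, hC⟩
  · refine ⟨∫ t, |φ t|, fun x => ?_⟩
    rw [hF]
    exact (abs_integral_le_integral_abs).trans
      (setIntegral_le_integral hi.abs (Filter.Eventually.of_forall fun t => abs_nonneg _))

namespace IsStep

variable {ε : ℝ} {φ F : ℝ → ℝ}

lemma contF (h : IsStep ε φ F) : Continuous F :=
  continuous_iff_continuousAt.2 fun x => (h.deriv x).continuousAt

lemma derivG (h : IsStep ε φ F) (x : ℝ) :
    HasDerivAt (fun x => F x ^ 2 / 2) (φ x * F x) x := by
  refine (((h.deriv x).pow 2).div_const 2).congr_deriv ?_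
  push_cast
  ring

lemma derivG_right (h : IsStep ε φ F) (y u : ℝ) :
    HasDerivAt (fun y => F (y - u) ^ 2 / 2) (φ (y - u) * F (y - u)) y :=
  (h.derivG (y - u)).comp_sub_const y u

lemma derivG_left (h : IsStep ε φ F) (y u : ℝ) :
    HasDerivAt (fun u => -(F (y - u) ^ 2 / 2)) (φ (y - u) * F (y - u)) u := by
  exact ((h.derivG (y - u)).comp_const_sub y u).neg.congr_deriv (neg_neg _)

lemma integral_G (h : IsStep ε φ F) (u : ℝ) :
    ∫ y, φ (y - u) * F (y - u) = 1 / 2 := by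
  have hφ := h.cont
  have hF := h.contF
  have := (step_integral (R := |u| + ε) (a := 0) (b := 1 / 2) (h.derivG_right · u) (by fun_prop)
    (fun x hx => ?_) (fun x hx => ?_)).2
  · simpa using this
  · simp [h.low (x - u) (by linarith [neg_abs_le u])]
  · simp [h.high (x - u) (by linarith [le_abs_self u])]

lemma integral_cube (h : IsStep ε φ F) :
    ∫ y, φ y * (F y ^ 2 / 2) = 1 / 6 := by
  have hφ := h.cont
  have hF := h.contF
  have := (step_integral (f := fun y => F y ^ 3 / 6) (f' := fun y => φ y * (F y ^ 2 / 2))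
    (R := ε) (a := 0) (b := 1 / 6) (fun y => ?_) (by fun_prop)
    (fun x hx => ?_) (fun x hx => ?_)).2
  · simpa using this
  · refine (((h.deriv y).pow 3).div_const 6).congr_deriv ?_
    push_cast
    ring
  · simp [h.low x hx]
  · simp [h.high x hx]

/-- The total `y`-derivative of `G (y - u) * F y` integrates to `1 / 2`. -/
lemma integral_B (h : IsStep ε φ F) (u : ℝ) :
    ∫ y, (φ (y - u) * F (y - u) * F y + F (y - u) ^ 2 / 2 * φ y) = 1 / 2 := by
  have hφ := h.cont
  have hF := h.contF
  have := (step_integral (f := fun y => F (y - u) ^ 2 / 2 * F y) (R := |u| + ε)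
    (a := 0) (b := 1 / 2)
    (fun y => (h.derivG_right y u).mul (h.deriv y)) (by fun_prop)
    (fun x hx => ?_) (fun x hx => ?_)).2
  · simpa using this
  · simp [h.low (x - u) (by linarith [neg_abs_le u])]
  · simp [h.high (x - u) (by linarith [le_abs_self u]),
      h.high x (by linarith [abs_nonneg u])]

/-- The total `u`-derivative of `-G (y - u) * F u` integrates to `0`. -/
lemma integral_C (h : IsStep ε φ F) (y : ℝ) :
    ∫ u, (φ (y - u) * F (y - u) * F u - F (y - u) ^ 2 / 2 * φ u) = 0 := by
  have hφ := h.cont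
  have hF := h.contF
  have := (step_integral (f := fun u => -(F (y - u) ^ 2 / 2) * F u)
    (f' := fun u => φ (y - u) * F (y - u) * F u - F (y - u) ^ 2 / 2 * φ u) (R := |y| + ε)
    (a := 0) (b := 0)
    (fun u => ?_) (by fun_prop) (fun x hx => ?_) (fun x hx => ?_)).2
  · simpa using this
  · refine ((h.derivG_left y u).mul (h.deriv u)).congr_deriv ?_
    ring
  · simp [h.low x (by linarith [abs_nonneg y])]
  · simp [h.low (y - x) (by linarith [le_abs_self y])]

lemma integral_Ioi (h : IsStep ε φ F) (y : ℝ) :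
    ∫ u in Ioi 0, φ (y - u) * F (y - u) = F y ^ 2 / 2 := by
  have hφ := h.cont
  have hF := h.contF
  have hz : ∀ u ≥ |y| + ε, -(F (y - u) ^ 2 / 2) = 0 := fun u hu => by
    simp [h.low (y - u) (by linarith [le_abs_self y])]
  have hi := (step_integral (R := |y| + ε) (a := -(1 / 2)) (b := 0) (h.derivG_left y)
    (by fun_prop) (fun x hx => by
      simp [h.high (y - x) (by linarith [neg_abs_le y])]) hz).1
  rw [integral_Ioi_of_hasDerivAt_of_tendsto (m := 0)
    (h.derivG_left y 0).continuousAt.continuousWithinAt (fun u _ => h.derivG_left y u)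
    hi.integrableOn]
  · simp
  · refine tendsto_const_nhds.congr' ?_
    filter_upwards [Filter.eventually_ge_atTop (|y| + ε)] with x hx using (hz x hx).symm

lemma integral_Iic (h : IsStep ε φ F) (y u : ℝ) :
    ∫ x in Iic y, φ (x - u) = F (y - u) := by
  have hz : ∀ x ≤ -(|u| + ε), F (x - u) = 0 := fun x hx =>
    h.low _ (by linarith [neg_abs_le u])
  have hd : ∀ x, HasDerivAt (fun x => F (x - u)) (φ (x - u)) x := fun x =>
    (h.deriv (x - u)).comp_sub_const x u
  have hφ := h.cont
  have hi := (step_integral (R := |u| + ε) (a := 0) (b := 1) hd (by fun_prop) hz fun x hx =>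
      h.high _ (by linarith [le_abs_self u])).1
  rw [integral_Iic_of_hasDerivAt_of_tendsto (m := 0) (hd y).continuousAt.continuousWithinAt
    (fun x _ => hd x) hi.integrableOn, sub_zero]
  refine tendsto_const_nhds.congr' ?_
  filter_upwards [Filter.eventually_le_atBot (-(|u| + ε))] with x hx using (hz x hx).symm

/-- Once `x` has been integrated out, the four-term decomposition evaluates the remaining
double integral. -/
lemma integral_two (h : IsStep ε φ F) {Θ : ℝ → ℝ} (hΘ : Θ = (Ioi 0).indicator 1) :
    ∫ y, ∫ u, φ (y - u) * F (y - u) * (φ u * (F y - F u) + φ y * (F u - Θ u)) = 1 / 12 := by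
  have mφ := h.cont.measurable
  have mF := h.contF.measurable
  have mΘ : Measurable Θ := by
    rw [hΘ]; exact measurable_one.indicator measurableSet_Ioi
  have bφ := h.bdφ
  have bF := h.bdF
  have bG : Bd (fun x => F x ^ 2 / 2) := by
    convert (bF.mul bF).mul (⟨1 / 2, fun _ => by norm_num⟩ : Bd fun _ : ℝ => (1 / 2 : ℝ)) using 2
    ring
  have bΘ : Bd Θ := ⟨1, fun x => by
    rw [hΘ]; by_cases hx : x ∈ Ioi (0 : ℝ) <;> simp [hx]⟩
  let T1 : ℝ × ℝ → ℝ := fun p =>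
    φ p.2 * (φ (p.1 - p.2) * F (p.1 - p.2) * F p.1 + F (p.1 - p.2) ^ 2 / 2 * φ p.1)
  let T2 : ℝ × ℝ → ℝ := fun p => φ p.2 * F p.2 * (φ (p.1 - p.2) * F (p.1 - p.2))
  let T3 : ℝ × ℝ → ℝ := fun p =>
    φ p.1 * (φ (p.1 - p.2) * F (p.1 - p.2) * F p.2 - F (p.1 - p.2) ^ 2 / 2 * φ p.2)
  let T4 : ℝ × ℝ → ℝ := fun p => φ p.1 * (φ (p.1 - p.2) * F (p.1 - p.2) * Θ p.2)
  -- if two of the three numbers `y`, `u`, `y - u` are within `ε` of `0`, then `(y, u)` is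
  -- within `2 * ε` of the origin
  have key : ∀ p : ℝ × ℝ, (|p.1| ≤ ε ∧ |p.2| ≤ ε) ∨ (|p.1| ≤ ε ∧ |p.1 - p.2| ≤ ε) ∨
      (|p.2| ≤ ε ∧ |p.1 - p.2| ≤ ε) → ‖p‖ ≤ 2 * ε := by
    rintro ⟨y, u⟩ hp
    simp only [abs_le] at hp
    rw [Prod.norm_def, Real.norm_eq_abs, Real.norm_eq_abs]
    refine max_le (abs_le.2 ?_) (abs_le.2 ?_) <;>
      rcases hp with hp | hp | hp <;> constructor <;> linarith
  have i1 : Integrable T1 (volume.prod volume) := by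
    refine integrable_of_bdd (by fun_prop) ?_ (2 * ε) fun p hp => key p ?_
    · exact (bφ.comp _).mul ((((bφ.comp _).mul (bF.comp _)).mul (bF.comp _)).add
        ((bG.comp fun p : ℝ × ℝ => p.1 - p.2).mul (bφ.comp _)))
    · have h1 := left_ne_zero_of_mul hp
      by_cases h2 : φ p.1 = 0
      · have h3 : φ (p.1 - p.2) ≠ 0 := fun h3 => hp (by simp [T1, h2, h3])
        exact Or.inr (Or.inr ⟨h.supp _ h1, h.supp _ h3⟩)
      · exact Or.inl ⟨h.supp _ h2, h.supp _ h1⟩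
  have i2 : Integrable T2 (volume.prod volume) := by
    refine integrable_of_bdd (by fun_prop) ?_ (2 * ε) fun p hp => key p ?_
    · exact ((bφ.comp _).mul (bF.comp _)).mul ((bφ.comp _).mul (bF.comp _))
    · have h1 := left_ne_zero_of_mul (left_ne_zero_of_mul hp)
      have h2 := left_ne_zero_of_mul (right_ne_zero_of_mul hp)
      exact Or.inr (Or.inr ⟨h.supp _ h1, h.supp _ h2⟩)
  have i3 : Integrable T3 (volume.prod volume) := by
    refine integrable_of_bdd (by fun_prop) ?_ (2 * ε) fun p hp => key p ?_
    · exact (bφ.comp _).mul ((((bφ.comp _).mul (bF.comp _)).mul (bF.comp _)).sub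
        ((bG.comp fun p : ℝ × ℝ => p.1 - p.2).mul (bφ.comp _)))
    · have h1 := left_ne_zero_of_mul hp
      by_cases h2 : φ p.2 = 0
      · have h3 : φ (p.1 - p.2) ≠ 0 := fun h3 => hp (by simp [T3, h2, h3])
        exact Or.inr (Or.inl ⟨h.supp _ h1, h.supp _ h3⟩)
      · exact Or.inl ⟨h.supp _ h1, h.supp _ h2⟩
  have i4 : Integrable T4 (volume.prod volume) := by
    refine integrable_of_bdd (by fun_prop) ?_ (2 * ε) fun p hp => key p ?_
    · exact (bφ.comp _).mul (((bφ.comp _).mul (bF.comp _)).mul (bΘ.comp _))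
    · have h1 := left_ne_zero_of_mul hp
      have h2 := left_ne_zero_of_mul (left_ne_zero_of_mul (right_ne_zero_of_mul hp))
      exact Or.inr (Or.inl ⟨h.supp _ h1, h.supp _ h2⟩)
  have e1 : ∫ p, T1 p ∂(volume.prod volume) = 1 / 2 := by
    rw [integral_prod_symm _ i1]
    simp only [T1, integral_const_mul, h.integral_B]
    rw [integral_mul_const, (step_integral h.deriv h.cont h.low h.high).2]
    norm_num
  have e2 : ∫ p, T2 p ∂(volume.prod volume) = 1 / 4 := by
    rw [integral_prod_symm _ i2]
    simp only [T2, integral_const_mul, h.integral_G]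
    have := h.integral_G 0
    simp only [sub_zero] at this
    rw [integral_mul_const, this]
    norm_num
  have e3 : ∫ p, T3 p ∂(volume.prod volume) = 0 := by
    rw [integral_prod _ i3]
    simp only [T3, integral_const_mul, h.integral_C, mul_zero, integral_zero]
  have e4 : ∫ p, T4 p ∂(volume.prod volume) = 1 / 6 := by
    rw [integral_prod _ i4]
    have : ∀ y, ∫ u, φ (y - u) * F (y - u) * Θ u = F y ^ 2 / 2 := fun y => by
      rw [← h.integral_Ioi y, ← integral_indicator measurableSet_Ioi]
      congr 1
      funext u
      rw [hΘ]
      by_cases hu : u ∈ Ioi (0 : ℝ) <;> simp [hu]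
    simp only [T4, integral_const_mul, this, h.integral_cube]
  have hsum : ∀ y u, φ (y - u) * F (y - u) * (φ u * (F y - F u) + φ y * (F u - Θ u))
      = (T1 - T2 + T3 - T4) (y, u) := fun y u => by
    simp only [T1, T2, T3, T4, Pi.add_apply, Pi.sub_apply]
    ring
  simp only [hsum]
  rw [← integral_prod _ (((i1.sub i2).add i3).sub i4), integral_sub' ((i1.sub i2).add i3) i4,
    integral_add' (i1.sub i2) i3, integral_sub' i1 i2, e1, e2, e3, e4]
  norm_num

end IsStep

/-- The genus-two obstruction integral over the half-plane `{y ≥ x}` equals `1/12`;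
in particular it is nonzero. -/
theorem halfplane_integral_of_obstruction_eq_one_twelfth
    (ε : ℝ) (hε : 0 < ε)
    (φ : ℝ → ℝ) (hφ : ContDiff ℝ (⊤ : ℕ∞) φ)
    (hφsupp : Function.support φ ⊆ Ioo (-ε) ε)
    (hφint : (∫ t, φ t) = 1)
    (F : ℝ → ℝ) (hF : ∀ x, F x = ∫ t in Iic x, φ t)
    (Θ : ℝ → ℝ) (hΘ : ∀ t, Θ t = if 0 < t then 1 else 0)
    (m : ℝ × ℝ → ℝ)
    (hm : ∀ x y : ℝ, m (x, y) =
      ∫ u, φ (x - u) * φ (y - u) * (φ u * (F y - F u) + φ y * (F u - Θ u))) :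
    (∫ p in {p : ℝ × ℝ | p.1 ≤ p.2}, m p) = 1 / 12 ∧
    (∫ p in {p : ℝ × ℝ | p.1 ≤ p.2}, m p) ≠ 0 := by
  suffices H : (∫ p in {p : ℝ × ℝ | p.1 ≤ p.2}, m p) = 1 / 12 by
    rw [H]; norm_num
  have h : IsStep ε φ F := isStep_of_cutoff hφ.continuous hφsupp hφint hF
  have hΘ' : Θ = (Ioi 0).indicator 1 := by
    funext t
    simp [hΘ, indicator_apply]
  have mφ := h.cont.measurable
  have mF := h.contF.measurable
  have mΘ : Measurable Θ := by
    rw [hΘ']; exact measurable_one.indicator measurableSet_Ioi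
  have bφ := h.bdφ
  have bF := h.bdF
  have bΘ : Bd Θ := ⟨1, fun x => by
    rw [hΘ]; split_ifs <;> simp⟩
  let K : ℝ → ℝ → ℝ → ℝ := fun x y u =>
    φ (x - u) * φ (y - u) * (φ u * (F y - F u) + φ y * (F u - Θ u))
  have hK : ∀ x y u, K x y u ≠ 0 → |x| ≤ 3 * ε ∧ |y| ≤ 3 * ε ∧ |u| ≤ 3 * ε := by
    intro x y u hne
    have h1 := abs_le.1 (h.supp _ (left_ne_zero_of_mul (left_ne_zero_of_mul hne)))
    have h2 := abs_le.1 (h.supp _ (right_ne_zero_of_mul (left_ne_zero_of_mul hne)))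
    have h3 : φ u ≠ 0 ∨ φ y ≠ 0 := by
      by_contra! h3
      exact hne (by simp [K, h3.1, h3.2])
    simp only [abs_le]
    rcases h3 with h3 | h3 <;> have h3 := abs_le.1 (h.supp _ h3) <;>
      refine ⟨⟨?_, ?_⟩, ⟨?_, ?_⟩, ?_, ?_⟩ <;> linarith
  have bK : Bd (fun q : (ℝ × ℝ) × ℝ => K q.1.1 q.1.2 q.2) :=
    ((bφ.comp _).mul (bφ.comp _)).mul
      (((bφ.comp _).mul ((bF.comp _).sub (bF.comp _))).add
        ((bφ.comp _).mul ((bF.comp _).sub (bΘ.comp _))))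
  have iK : Integrable (fun q : (ℝ × ℝ) × ℝ => K q.1.1 q.1.2 q.2) (volume.prod volume) := by
    refine integrable_of_bdd (by fun_prop) bK (3 * ε) fun q hq => ?_
    obtain ⟨h1, h2, h3⟩ := hK _ _ _ hq
    exact max_le (max_le h1 h2) h3
  have iKy : ∀ y, Integrable (Function.uncurry fun x u => K x y u)
      ((volume.restrict (Iic y)).prod volume) := fun y => by
    refine integrable_of_bdd (by unfold Function.uncurry; fun_prop)
      (bK.comp fun q : ℝ × ℝ => ((q.1, y), q.2)) (3 * ε) fun q hq => ?_
    obtain ⟨h1, h2, h3⟩ := hK _ _ _ hq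
    exact max_le h1 h3
  have im : Integrable m (volume.prod volume) := by
    have : m = fun p => ∫ u, K p.1 p.2 u := by
      funext ⟨x, y⟩
      exact hm x y
    rw [this]
    exact iK.integral_prod_left
  have hS : MeasurableSet {p : ℝ × ℝ | p.1 ≤ p.2} := measurableSet_le measurable_fst measurable_snd
  rw [← integral_indicator hS, Measure.volume_eq_prod, integral_prod_symm _ (im.indicator hS),
    ← h.integral_two hΘ']
  congr 1
  funext y
  have e : ∀ x, {p : ℝ × ℝ | p.1 ≤ p.2}.indicator m (x, y)
      = (Iic y).indicator (fun x => ∫ u, K x y u) x := fun x => by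
    by_cases hx : x ≤ y <;> simp [hx, hm, K]
  simp only [e]
  rw [integral_indicator measurableSet_Iic, integral_integral_swap (iKy y)]
  congr 1
  funext u
  simp only [K, mul_assoc]
  rw [integral_mul_const, h.integral_Iic]
  ring
end

section
/- The integral of m over all of ℝ² equals 0. (This is the computation showing that the obstruction two-form μ_ε attached to the genus-one properadic generator is exact among compactly supported forms, so that the genus-one homotopy can be chosen quasilocally.) -/
open MeasureTheory Set

/-!
Integrating out `x` removes the factor `φ (x - u)`, whose integral is `1`. What remains is the
integral over `(y, u)` of `φ (y - u) * (φ u * (F y - F u) + φ y * (F u - Θ u))`, a sum of four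
absolutely convergent integrals. With `I t = ∫ φ y * F (y + t) dy`, translations and Fubini turn
them into `∫ φ t * I t dt`, `-I 0`, `∫ φ t * I (-t) dt` and `-I 0` (the last because
`∫ φ t * Θ (y - t) dt = F y`). Integrating the derivative of `y ↦ F y * F (y - t)` over the line
gives `I (-t) + I t = 1`, so that the first and third terms add up to `∫ φ = 1`, and `2 * I 0 = 1`.
-/

/-- Integration by parts for a distribution function `F`: the boundary term of
`y ↦ F y * F (y - t)` is `1`. -/
lemma integral_mul_shift_add (φ F : ℝ → ℝ) (hφi : Integrable φ)
    (hd : ∀ x, HasDerivAt F (φ x) x) (C : ℝ) (hC : ∀ x, ‖F x‖ ≤ C)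
    (hbot : Filter.Tendsto F Filter.atBot (nhds 0))
    (htop : Filter.Tendsto F Filter.atTop (nhds 1)) (t : ℝ) :
    (∫ y, φ y * F (y - t)) + ∫ y, φ y * F (y + t) = 1 := by
  have hFc : Continuous F := continuous_iff_continuousAt.2 fun x => (hd x).continuousAt
  have i1 : Integrable fun y => φ y * F (y - t) :=
    hφi.mul_bdd (by fun_prop) (.of_forall fun y => hC _)
  have i2 : Integrable fun y => φ y * F (y + t) :=
    hφi.mul_bdd (by fun_prop) (.of_forall fun y => hC _)
  have e2 : (fun y => F y * φ (y - t)) = fun y => (fun z => φ z * F (z + t)) (y - t) := by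
    ext y; simp [mul_comm]
  have i3 : Integrable fun y => F y * φ (y - t) := by
    rw [e2]; exact i2.comp_sub_right t
  have hs : ∫ y, F y * φ (y - t) = ∫ y, φ y * F (y + t) := by
    rw [e2, integral_sub_right_eq_self (fun z => φ z * F (z + t)) t]
  have hder : ∀ y, HasDerivAt (fun y => F y * F (y - t)) (φ y * F (y - t) + F y * φ (y - t)) y :=
    fun y => (hd y).mul ((hd (y - t)).comp_sub_const y t)
  have key := integral_of_hasDerivAt_of_tendsto hder (i1.add i3)
    (hbot.mul (hbot.comp (Filter.tendsto_atBot_add_const_right _ (-t) Filter.tendsto_id)))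
    (htop.mul (htop.comp (Filter.tendsto_atTop_add_const_right _ (-t) Filter.tendsto_id)))
  rw [← hs, ← integral_add i1 i3, key]
  norm_num

/-- Integrating out `x`: the factor `φ (x - u)` contributes `∫ φ = 1`. -/
lemma integral_integral_shift_mul (φ : ℝ → ℝ) (hφc : Continuous φ) (hφi : Integrable φ)
    (hφ1 : ∫ t, φ t = 1) (K : ℝ × ℝ → ℝ) (hKm : Measurable K) (hK : Integrable K) :
    ∫ p : ℝ × ℝ, ∫ u, φ (p.1 - u) * K (p.2, u) = ∫ z, K z := by
  have hK' : Integrable K ((volume : Measure ℝ).prod volume) := hK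
  have hint : Integrable (Function.uncurry fun (p : ℝ × ℝ) (u : ℝ) => φ (p.1 - u) * K (p.2, u))
      ((volume : Measure (ℝ × ℝ)).prod volume) := by
    have hm : Measurable (Function.uncurry
        fun (p : ℝ × ℝ) (u : ℝ) => φ (p.1 - u) * K (p.2, u)) := by
      have := hφc.measurable
      unfold Function.uncurry
      fun_prop
    rw [integrable_prod_iff' hm.aestronglyMeasurable]
    constructor
    · filter_upwards [hK'.prod_left_ae] with u hu
      exact (hφi.comp_sub_right u).mul_prod hu
    · have : (fun u => ∫ p : ℝ × ℝ, ‖φ (p.1 - u) * K (p.2, u)‖)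
          = fun u => (∫ x, ‖φ x‖) * ∫ y, ‖K (y, u)‖ := by
        ext u
        simp_rw [norm_mul]
        rw [← integral_sub_right_eq_self (fun x => ‖φ x‖) u]
        exact integral_prod_mul (fun x => ‖φ (x - u)‖) fun y => ‖K (y, u)‖
      simp only [Function.uncurry]
      rw [this]
      exact hK'.integral_norm_prod_right.const_mul _
  rw [integral_integral_swap hint]
  have : ∀ u, ∫ p : ℝ × ℝ, φ (p.1 - u) * K (p.2, u) = ∫ y, K (y, u) := by
    intro u
    have h := integral_prod_mul (μ := (volume : Measure ℝ)) (ν := (volume : Measure ℝ))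
      (fun x => φ (x - u)) fun y => K (y, u)
    rw [integral_sub_right_eq_self φ u, hφ1, one_mul] at h
    exact h
  simp_rw [this]
  exact (integral_prod_symm K hK').symm

/-- The genus-one obstruction integral over all of `ℝ²` vanishes. -/
theorem total_integral_of_obstruction_eq_zero
    (ε : ℝ) (hε : 0 < ε)
    (φ : ℝ → ℝ) (hφ : ContDiff ℝ (⊤ : ℕ∞) φ)
    (hφsupp : Function.support φ ⊆ Ioo (-ε) ε)
    (hφint : (∫ t, φ t) = 1)
    (F : ℝ → ℝ) (hF : ∀ x, F x = ∫ t in Iic x, φ t)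
    (Θ : ℝ → ℝ) (hΘ : ∀ t, Θ t = if 0 < t then 1 else 0)
    (m : ℝ × ℝ → ℝ)
    (hm : ∀ x y : ℝ, m (x, y) =
      ∫ u, φ (x - u) * φ (y - u) * (φ u * (F y - F u) + φ y * (F u - Θ u))) :
    (∫ p : ℝ × ℝ, m p) = 0 := by
  have hφc : Continuous φ := hφ.continuous
  have hφi : Integrable φ := hφc.integrable_of_hasCompactSupport
    (HasCompactSupport.of_support_subset_isCompact isCompact_Icc
      (hφsupp.trans Ioo_subset_Icc_self))
  have hd : ∀ x, HasDerivAt F (φ x) x := by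
    intro x
    have : F = fun x => F 0 + ∫ t in (0 : ℝ)..x, φ t := by
      ext y
      rw [hF, hF, ← intervalIntegral.integral_Iic_sub_Iic hφi.integrableOn hφi.integrableOn]
      ring
    rw [this]
    exact (hφc.integral_hasStrictDerivAt 0 x).hasDerivAt.const_add _
  have hFc : Continuous F := continuous_iff_continuousAt.2 fun x => (hd x).continuousAt
  obtain ⟨C, hC⟩ : ∃ C, ∀ x, ‖F x‖ ≤ C := by
    refine ⟨∫ t, ‖φ t‖, fun x => ?_⟩
    rw [hF]
    exact (norm_integral_le_integral_norm _).trans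
      (setIntegral_le_integral hφi.norm (.of_forall fun _ => norm_nonneg _))
  have hbot : Filter.Tendsto F Filter.atBot (nhds 0) := by
    refine tendsto_const_nhds.congr' ?_
    filter_upwards [Filter.eventually_le_atBot (-ε)] with x hx
    rw [hF, setIntegral_eq_zero_of_forall_eq_zero]
    intro t ht
    by_contra h
    exact absurd (hφsupp h).1 (not_lt.2 (le_trans ht hx))
  have htop : Filter.Tendsto F Filter.atTop (nhds 1) := by
    refine tendsto_const_nhds.congr' ?_
    filter_upwards [Filter.eventually_ge_atTop ε] with x hx
    rw [hF, setIntegral_eq_integral_of_forall_compl_eq_zero, hφint]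
    intro t ht
    by_contra h
    exact ht ((hφsupp h).2.le.trans hx)
  have parts := integral_mul_shift_add φ F hφi hd C hC hbot htop
  have hΘm : Measurable Θ := by
    have : Θ = fun t => if 0 < t then 1 else 0 := funext hΘ
    rw [this]
    exact Measurable.ite measurableSet_Ioi measurable_const measurable_const
  have hΘb : ∀ t, ‖Θ t‖ ≤ 1 := by
    intro t; rw [hΘ]; split_ifs <;> simp
  have hφm := hφc.measurable
  have hFm := hFc.measurable
  -- The two absolutely convergent kernels that carry all four terms.
  have base1 : Integrable (fun p : ℝ × ℝ => φ p.2 * φ (p.1 - p.2))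
      ((volume : Measure ℝ).prod volume) :=
    hφi.convolution_integrand (ContinuousLinearMap.mul ℝ ℝ) hφi
  have base2 : Integrable (fun p : ℝ × ℝ => φ p.1 * φ (p.1 - p.2))
      ((volume : Measure ℝ).prod volume) := by
    have := (hφi.convolution_integrand (ContinuousLinearMap.mul ℝ ℝ) hφi.comp_neg).swap
    refine this.congr (.of_forall fun p => ?_)
    simp
  have i1 : Integrable (fun p : ℝ × ℝ => φ p.2 * φ (p.1 - p.2) * F p.1)
      ((volume : Measure ℝ).prod volume) :=
    base1.mul_bdd (by fun_prop) (.of_forall fun y => hC _)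
  have i2 : Integrable (fun p : ℝ × ℝ => φ p.2 * φ (p.1 - p.2) * F p.2)
      ((volume : Measure ℝ).prod volume) :=
    base1.mul_bdd (by fun_prop) (.of_forall fun y => hC _)
  have i3 : Integrable (fun p : ℝ × ℝ => φ p.1 * φ (p.1 - p.2) * F p.2)
      ((volume : Measure ℝ).prod volume) :=
    base2.mul_bdd (by fun_prop) (.of_forall fun y => hC _)
  have i4 : Integrable (fun p : ℝ × ℝ => φ p.1 * φ (p.1 - p.2) * Θ p.2)
      ((volume : Measure ℝ).prod volume) :=
    base2.mul_bdd (hΘm.comp measurable_snd).aestronglyMeasurable (.of_forall fun y => hΘb _)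
  have j1 : Integrable (fun p : ℝ × ℝ => φ p.1 * φ p.2 * F (p.2 + p.1))
      ((volume : Measure ℝ).prod volume) :=
    (hφi.mul_prod hφi).mul_bdd (by fun_prop) (.of_forall fun y => hC _)
  have j3 : Integrable (fun p : ℝ × ℝ => φ p.1 * φ p.2 * F (p.2 - p.1))
      ((volume : Measure ℝ).prod volume) :=
    (hφi.mul_prod hφi).mul_bdd (by fun_prop) (.of_forall fun y => hC _)
  have v1 : ∫ p : ℝ × ℝ, φ p.2 * φ (p.1 - p.2) * F p.1 = ∫ t, φ t * ∫ y, φ y * F (y + t) := by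
    refine (integral_prod_symm _ i1).trans (integral_congr_ae (.of_forall fun u => ?_))
    simp only [mul_assoc]
    rw [integral_const_mul, ← integral_sub_right_eq_self (fun y => φ y * F (y + u)) u]
    simp
  have v2 : ∫ p : ℝ × ℝ, φ p.2 * φ (p.1 - p.2) * F p.2 = ∫ y, φ y * F y := by
    refine (integral_prod_symm _ i2).trans (integral_congr_ae (.of_forall fun u => ?_))
    simp only
    rw [integral_mul_const, integral_const_mul, integral_sub_right_eq_self φ u, hφint, mul_one]
  have v3 : ∫ p : ℝ × ℝ, φ p.1 * φ (p.1 - p.2) * F p.2 = ∫ t, φ t * ∫ y, φ y * F (y - t) := by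
    have h : ∫ t, φ t * ∫ y, φ y * F (y - t) = ∫ p : ℝ × ℝ, φ p.1 * φ p.2 * F (p.2 - p.1) := by
      refine Eq.trans ?_ (integral_prod _ j3).symm
      simp only [mul_assoc, integral_const_mul]
    rw [h]
    refine (integral_prod _ i3).trans (Eq.trans ?_ (integral_prod_symm _ j3).symm)
    refine integral_congr_ae (.of_forall fun y => ?_)
    simp only
    rw [← integral_sub_left_eq_self (fun t => φ t * φ y * F (y - t)) volume y]
    simp [mul_comm]
  have v4 : ∫ p : ℝ × ℝ, φ p.1 * φ (p.1 - p.2) * Θ p.2 = ∫ y, φ y * F y := by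
    refine (integral_prod _ i4).trans (integral_congr_ae (.of_forall fun y => ?_))
    simp only [mul_assoc]
    rw [integral_const_mul]
    congr 1
    have h : ∫ u, φ (y - u) * Θ u = ∫ t, φ t * Θ (y - t) := by
      rw [← integral_sub_left_eq_self (fun t => φ t * Θ (y - t)) volume y]
      simp
    rw [h, hF, integral_Iic_eq_integral_Iio, ← integral_indicator measurableSet_Iio]
    congr 1
    ext t
    simp [hΘ, indicator_apply]
  have hmK : ∀ p : ℝ × ℝ, m p = ∫ u, φ (p.1 - u) *
      (fun z : ℝ × ℝ => φ z.2 * φ (z.1 - z.2) * F z.1 - φ z.2 * φ (z.1 - z.2) * F z.2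
        + φ z.1 * φ (z.1 - z.2) * F z.2 - φ z.1 * φ (z.1 - z.2) * Θ z.2) (p.2, u) := by
    rintro ⟨x, y⟩
    rw [hm]
    congr 1
    ext u
    ring
  refine (integral_congr_ae (.of_forall hmK)).trans ((integral_integral_shift_mul φ hφc hφi hφint
    _ (by fun_prop) (((i1.sub i2).add i3).sub i4)).trans ?_)
  have hsum : (∫ t, φ t * ∫ y, φ y * F (y - t)) + ∫ t, φ t * ∫ y, φ y * F (y + t) = 1 := by
    have k1 : Integrable fun t => φ t * ∫ y, φ y * F (y + t) := by
      simpa only [mul_assoc, integral_const_mul] using j1.integral_prod_left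
    have k3 : Integrable fun t => φ t * ∫ y, φ y * F (y - t) := by
      simpa only [mul_assoc, integral_const_mul] using j3.integral_prod_left
    rw [← integral_add k3 k1]
    simp_rw [← mul_add, parts, mul_one, hφint]
  have h0 := parts 0
  simp only [sub_zero, add_zero] at h0
  have hsplit : ∫ z : ℝ × ℝ, (φ z.2 * φ (z.1 - z.2) * F z.1 - φ z.2 * φ (z.1 - z.2) * F z.2
        + φ z.1 * φ (z.1 - z.2) * F z.2 - φ z.1 * φ (z.1 - z.2) * Θ z.2)
      = (∫ p : ℝ × ℝ, φ p.2 * φ (p.1 - p.2) * F p.1) - (∫ p : ℝ × ℝ, φ p.2 * φ (p.1 - p.2) * F p.2)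
        + (∫ p : ℝ × ℝ, φ p.1 * φ (p.1 - p.2) * F p.2)
        - ∫ p : ℝ × ℝ, φ p.1 * φ (p.1 - p.2) * Θ p.2 := by
    refine (integral_sub ((i1.sub i2).add i3) i4).trans ?_
    congr 1
    refine (integral_add (i1.sub i2) i3).trans ?_
    congr 1
    exact integral_sub i1 i2
  refine hsplit.trans ?_
  rw [v1, v2, v3, v4]
  linarith
end

section
/- The integral of m over the closed half-plane {(x,y) ∈ ℝ² : y ≥ x} equals ∫_ℝ F(s)·φ(s)·(F(s) − 1/2) ds. (This is the Fubini-and-translation reduction of the double obstruction integral to a single integral, obtained by integrating out the x-variable against φ and substituting s = y − u.) -/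
/-!
Integrating out `x` over `x ≤ y` turns `φ (x - u)` into `F (y - u)`, and the substitution
`y = s + u` then gives
`∫ F s φ s (∫ (φ u (F (s + u) - F u) + φ (s + u) (F u - Θ u)) du) ds`.
In the inner integral, `φ u F (s + u) + φ (s + u) F u` is the derivative of `F u F (s + u)` and
contributes `1`, `φ u F u` is the derivative of `F² / 2` and contributes `1 / 2`, and the
Heaviside term contributes `∫_{v > s} φ v = 1 - F s`. Hence the inner integral is `F s - 1 / 2`.

Both uses of Fubini are justified by writing the integrand as `A - Θ u * B` with `A` and `B`
continuous and compactly supported (`integrable_triple`, `integrable_pair`).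
-/

open MeasureTheory Set Filter Topology

namespace HalfPlane

section Cumulative

variable {ε : ℝ} {φ F : ℝ → ℝ}

lemma eq_zero_of_le_abs (hs : Function.support φ ⊆ Ioo (-ε) ε) {t : ℝ} (ht : ε ≤ |t|) :
    φ t = 0 := by
  by_contra h
  have h2 := hs h
  exact absurd (abs_lt.2 ⟨h2.1, h2.2⟩) (not_lt.2 ht)

lemma integrable_phi (hc : Continuous φ) (hs : Function.support φ ⊆ Ioo (-ε) ε) :
    Integrable φ := by
  refine hc.integrable_of_hasCompactSupport ?_
  refine HasCompactSupport.intro (isCompact_closedBall (0 : ℝ) ε) fun t ht => ?_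
  apply eq_zero_of_le_abs hs
  simp at ht
  exact ht.le

lemma hasDerivAt_F (hc : Continuous φ) (hi : Integrable φ)
    (hF : ∀ x, F x = ∫ t in Iic x, φ t) (x : ℝ) : HasDerivAt F (φ x) x := by
  have h : F = fun x => F 0 + ∫ t in (0 : ℝ)..x, φ t := by
    ext x
    rw [← intervalIntegral.integral_Iic_sub_Iic hi.integrableOn hi.integrableOn, hF x, hF 0]
    ring
  rw [h]
  exact (hc.integral_hasStrictDerivAt 0 x).hasDerivAt.const_add _

lemma F_tendsto_bot (hs : Function.support φ ⊆ Ioo (-ε) ε)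
    (hF : ∀ x, F x = ∫ t in Iic x, φ t) : Tendsto F atBot (𝓝 0) := by
  refine tendsto_const_nhds.congr' ?_
  filter_upwards [Iic_mem_atBot (-ε)] with x hx
  rw [hF, setIntegral_eq_zero_of_forall_eq_zero]
  intro t ht
  simp only [mem_Iic] at hx ht
  exact eq_zero_of_le_abs hs (by linarith [neg_le_abs t])

lemma F_tendsto_top (hs : Function.support φ ⊆ Ioo (-ε) ε) (h1 : (∫ t, φ t) = 1)
    (hF : ∀ x, F x = ∫ t in Iic x, φ t) : Tendsto F atTop (𝓝 1) := by
  refine tendsto_const_nhds.congr' ?_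
  filter_upwards [Ici_mem_atTop ε] with x hx
  rw [hF, setIntegral_eq_integral_of_forall_compl_eq_zero, h1]
  intro t ht
  simp only [mem_Iic, not_le, mem_Ici] at hx ht
  exact eq_zero_of_le_abs hs (by linarith [le_abs_self t])

lemma integral_Iic_translate (hF : ∀ x, F x = ∫ t in Iic x, φ t) (y u : ℝ) :
    ∫ x in Iic y, φ (x - u) = F (y - u) := by
  rw [hF, ← integral_indicator measurableSet_Iic, ← integral_indicator measurableSet_Iic,
    ← integral_sub_right_eq_self ((Iic (y - u)).indicator φ) u]
  congr 1
  ext x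
  simp [indicator_apply]

lemma integral_heaviside (hi : Integrable φ) (h1 : (∫ t, φ t) = 1)
    (hF : ∀ x, F x = ∫ t in Iic x, φ t) (Θ : ℝ → ℝ) (hΘ : ∀ t, Θ t = if 0 < t then 1 else 0)
    (s : ℝ) : ∫ u, Θ u * φ (s + u) = 1 - F s := by
  have h : ∫ u, Θ u * φ (s + u) = ∫ v in Ioi s, φ v := by
    rw [← integral_indicator measurableSet_Ioi, ← integral_add_left_eq_self ((Ioi s).indicator φ) s]
    congr 1
    ext x
    simp [indicator_apply, hΘ]
  have h2 := integral_add_compl (measurableSet_Iic (a := s)) hi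
  rw [compl_Iic, h1, ← hF] at h2
  rw [h]
  linarith

end Cumulative

/-- The factor `Θ` is bounded and measurable, so it preserves integrability. -/
lemma integrable_heaviside_mul {α : Type*} [MeasurableSpace α] {μ : Measure α} {Θ : ℝ → ℝ}
    (hΘ : ∀ t, Θ t = if 0 < t then 1 else 0) {f : α → ℝ} {g : α → ℝ} (hf : Measurable f)
    (hg : Integrable g μ) : Integrable (fun a => Θ (f a) * g a) μ := by
  have hm : Measurable Θ := by
    have : Θ = fun t => if 0 < t then 1 else 0 := funext hΘ
    rw [this]
    exact Measurable.ite measurableSet_Ioi measurable_const measurable_const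
  refine hg.bdd_mul (c := 1) (hm.comp hf).aestronglyMeasurable (Eventually.of_forall fun a => ?_)
  rw [hΘ]
  split_ifs <;> simp

section Fubini

variable {ε : ℝ} {φ F Θ : ℝ → ℝ}

lemma integrable_triple (hc : Continuous φ) (hFc : Continuous F)
    (hs : Function.support φ ⊆ Ioo (-ε) ε) (hΘ : ∀ t, Θ t = if 0 < t then 1 else 0) :
    Integrable (fun q : (ℝ × ℝ) × ℝ => φ (q.1.1 - q.2) * φ (q.1.2 - q.2) *
      (φ q.2 * (F q.1.2 - F q.2) + φ q.1.2 * (F q.2 - Θ q.2))) := by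
  -- The factors force `|x - u|, |y - u| < ε` and one of `|u|, |y| < ε`.
  have hA : Integrable (fun q : (ℝ × ℝ) × ℝ => φ (q.1.1 - q.2) * φ (q.1.2 - q.2) *
      (φ q.2 * (F q.1.2 - F q.2) + φ q.1.2 * F q.2)) := by
    refine Continuous.integrable_of_hasCompactSupport (by fun_prop) ?_
    refine HasCompactSupport.intro (isCompact_closedBall 0 (3 * ε)) ?_
    rintro ⟨⟨x, y⟩, u⟩ hq
    contrapose! hq
    have h1 : |x - u| < ε := by
      by_contra! h; simp [eq_zero_of_le_abs hs h] at hq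
    have h2 : |y - u| < ε := by
      by_contra! h; simp [eq_zero_of_le_abs hs h] at hq
    have h3 : |u| < ε ∨ |y| < ε := by
      by_contra! h; simp [eq_zero_of_le_abs hs h.1, eq_zero_of_le_abs hs h.2] at hq
    simp only [abs_lt] at h1 h2 h3
    simp only [mem_closedBall_zero_iff, Prod.norm_def, Real.norm_eq_abs, sup_le_iff, abs_le]
    grind
  have hB : Integrable (fun q : (ℝ × ℝ) × ℝ => φ (q.1.1 - q.2) * φ (q.1.2 - q.2) *
      φ q.1.2) := by
    refine Continuous.integrable_of_hasCompactSupport (by fun_prop) ?_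
    refine HasCompactSupport.intro (isCompact_closedBall 0 (3 * ε)) ?_
    rintro ⟨⟨x, y⟩, u⟩ hq
    contrapose! hq
    have h1 : |x - u| < ε := by
      by_contra! h; simp [eq_zero_of_le_abs hs h] at hq
    have h2 : |y - u| < ε := by
      by_contra! h; simp [eq_zero_of_le_abs hs h] at hq
    have h3 : |y| < ε := by
      by_contra! h; simp [eq_zero_of_le_abs hs h] at hq
    simp only [abs_lt] at h1 h2 h3
    simp only [mem_closedBall_zero_iff, Prod.norm_def, Real.norm_eq_abs, sup_le_iff, abs_le]
    grind
  refine (hA.sub (integrable_heaviside_mul hΘ measurable_snd hB)).congr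
    (Eventually.of_forall fun q => ?_)
  simp only [Pi.sub_apply]
  ring

lemma integrable_pair (hc : Continuous φ) (hFc : Continuous F)
    (hs : Function.support φ ⊆ Ioo (-ε) ε) (hΘ : ∀ t, Θ t = if 0 < t then 1 else 0) :
    Integrable (fun q : ℝ × ℝ => F q.2 * φ q.2 *
      (φ q.1 * (F (q.2 + q.1) - F q.1) + φ (q.2 + q.1) * (F q.1 - Θ q.1))) := by
  have hA : Integrable (fun q : ℝ × ℝ => F q.2 * φ q.2 *
      (φ q.1 * (F (q.2 + q.1) - F q.1) + φ (q.2 + q.1) * F q.1)) := by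
    refine Continuous.integrable_of_hasCompactSupport (by fun_prop) ?_
    refine HasCompactSupport.intro (isCompact_closedBall 0 (3 * ε)) ?_
    rintro ⟨u, s⟩ hq
    contrapose! hq
    have h1 : |s| < ε := by
      by_contra! h; simp [eq_zero_of_le_abs hs h] at hq
    have h3 : |u| < ε ∨ |s + u| < ε := by
      by_contra! h; simp [eq_zero_of_le_abs hs h.1, eq_zero_of_le_abs hs h.2] at hq
    simp only [abs_lt] at h1 h3
    simp only [mem_closedBall_zero_iff, Prod.norm_def, Real.norm_eq_abs, sup_le_iff, abs_le]
    grind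
  have hB : Integrable (fun q : ℝ × ℝ => F q.2 * φ q.2 * φ (q.2 + q.1)) := by
    refine Continuous.integrable_of_hasCompactSupport (by fun_prop) ?_
    refine HasCompactSupport.intro (isCompact_closedBall 0 (3 * ε)) ?_
    rintro ⟨u, s⟩ hq
    contrapose! hq
    have h1 : |s| < ε := by
      by_contra! h; simp [eq_zero_of_le_abs hs h] at hq
    have h3 : |s + u| < ε := by
      by_contra! h; simp [eq_zero_of_le_abs hs h] at hq
    simp only [abs_lt] at h1 h3
    simp only [mem_closedBall_zero_iff, Prod.norm_def, Real.norm_eq_abs, sup_le_iff, abs_le]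
    grind
  refine (hA.sub (integrable_heaviside_mul hΘ measurable_fst hB)).congr
    (Eventually.of_forall fun q => ?_)
  simp only [Pi.sub_apply]
  ring

/-- A continuous function times a translate of `φ` is integrable. -/
lemma integrable_phi_mul (hc : Continuous φ) (hs : Function.support φ ⊆ Ioo (-ε) ε) (s : ℝ)
    {g : ℝ → ℝ} (hg : Continuous g) : Integrable (fun u => φ (s + u) * g u) := by
  refine Continuous.integrable_of_hasCompactSupport (by fun_prop) ?_
  refine HasCompactSupport.intro (isCompact_closedBall 0 (ε + |s|)) fun u hu => ?_
  contrapose! hu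
  have h1 : |s + u| < ε := by
    by_contra! h; simp [eq_zero_of_le_abs hs h] at hu
  rw [mem_closedBall_zero_iff, Real.norm_eq_abs]
  have := abs_sub (s + u) s
  rw [add_sub_cancel_left] at this
  linarith

lemma inner_integral (hc : Continuous φ) (hs : Function.support φ ⊆ Ioo (-ε) ε)
    (h1 : (∫ t, φ t) = 1) (hF : ∀ x, F x = ∫ t in Iic x, φ t)
    (hΘ : ∀ t, Θ t = if 0 < t then 1 else 0) (s : ℝ) :
    ∫ u, (φ u * (F (s + u) - F u) + φ (s + u) * (F u - Θ u)) = F s - 1 / 2 := by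
  have hi := integrable_phi hc hs
  have hd := hasDerivAt_F hc hi hF
  have hFc : Continuous F := continuous_iff_continuousAt.2 fun x => (hd x).continuousAt
  have hb := F_tendsto_bot hs hF
  have ht := F_tendsto_top hs h1 hF
  have h0 : ∀ {g : ℝ → ℝ}, Continuous g → Integrable (fun u => φ u * g u) := fun hg => by
    simpa using integrable_phi_mul hc hs 0 hg
  have iA : Integrable (fun u => φ u * F (s + u) + F u * φ (s + u)) :=
    (h0 (g := fun u => F (s + u)) (by fun_prop)).add
      ((integrable_phi_mul hc hs s hFc).congr (Eventually.of_forall fun u => mul_comm _ _))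
  have iB : Integrable (fun u => φ u * F u) := h0 hFc
  have iC : Integrable (fun u => Θ u * φ (s + u)) :=
    integrable_heaviside_mul hΘ measurable_id (hi.comp_add_left s)
  have eA : ∫ u, (φ u * F (s + u) + F u * φ (s + u)) = 1 * 1 - 0 * 0 :=
    integral_of_hasDerivAt_of_tendsto (f := fun u => F u * F (s + u))
      (fun u => (hd u).mul ((hd (s + u)).comp_const_add s u)) iA
      (hb.mul (hb.comp (tendsto_atBot_add_const_left _ s tendsto_id)))
      (ht.mul (ht.comp (tendsto_atTop_add_const_left _ s tendsto_id)))
  have eB : ∫ u, φ u * F u = 1 ^ 2 / 2 - 0 ^ 2 / 2 :=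
    integral_of_hasDerivAt_of_tendsto (f := fun u => F u ^ 2 / 2)
      (fun u => by
        refine (((hd u).fun_pow 2).div_const 2).congr_deriv ?_
        norm_num
        ring) iB
      ((hb.pow 2).div_const 2) ((ht.pow 2).div_const 2)
  have e : (fun u => φ u * (F (s + u) - F u) + φ (s + u) * (F u - Θ u)) =
      fun u => (φ u * F (s + u) + F u * φ (s + u)) - φ u * F u - Θ u * φ (s + u) := by
    ext u
    ring
  rw [e, integral_sub (f := fun u => _ - _) (iA.sub iB) iC, integral_sub iA iB, eA, eB,
    integral_heaviside hi h1 hF Θ hΘ]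
  ring

end Fubini

end HalfPlane

open HalfPlane in
/-- Fubini-and-translation reduction of the half-plane obstruction integral to a
single integral. -/
theorem halfplane_integral_eq_single_integral
    (ε : ℝ) (hε : 0 < ε)
    (φ : ℝ → ℝ) (hφ : ContDiff ℝ (⊤ : ℕ∞) φ)
    (hφsupp : Function.support φ ⊆ Ioo (-ε) ε)
    (hφint : (∫ t, φ t) = 1)
    (F : ℝ → ℝ) (hF : ∀ x, F x = ∫ t in Iic x, φ t)
    (Θ : ℝ → ℝ) (hΘ : ∀ t, Θ t = if 0 < t then 1 else 0)
    (m : ℝ × ℝ → ℝ)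
    (hm : ∀ x y : ℝ, m (x, y) =
      ∫ u, φ (x - u) * φ (y - u) * (φ u * (F y - F u) + φ y * (F u - Θ u))) :
    (∫ p in {p : ℝ × ℝ | p.1 ≤ p.2}, m p) =
      ∫ s, F s * φ s * (F s - 1 / 2) := by
  have hc := hφ.continuous
  have hi := integrable_phi hc hφsupp
  have hFc : Continuous F :=
    continuous_iff_continuousAt.2 fun x => (hasDerivAt_F hc hi hF x).continuousAt
  have hS : MeasurableSet {p : ℝ × ℝ | p.1 ≤ p.2} :=
    measurableSet_le measurable_fst measurable_snd
  have h3 := integrable_triple hc hFc hφsupp hΘ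
  have h3S : Integrable (Function.uncurry fun (p : ℝ × ℝ) (u : ℝ) =>
      φ (p.1 - u) * φ (p.2 - u) * (φ u * (F p.2 - F u) + φ p.2 * (F u - Θ u)))
      ((volume.restrict {p : ℝ × ℝ | p.1 ≤ p.2}).prod volume) := by
    have := h3.restrict (s := {p : ℝ × ℝ | p.1 ≤ p.2} ×ˢ univ)
    rw [Measure.volume_eq_prod, ← Measure.prod_restrict, Measure.restrict_univ] at this
    exact this
  calc (∫ p in {p : ℝ × ℝ | p.1 ≤ p.2}, m p)
      = ∫ p in {p : ℝ × ℝ | p.1 ≤ p.2}, ∫ u, φ (p.1 - u) * φ (p.2 - u) *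
          (φ u * (F p.2 - F u) + φ p.2 * (F u - Θ u)) := by
        congr 1
        ext p
        exact hm p.1 p.2
    _ = ∫ u, ∫ p in {p : ℝ × ℝ | p.1 ≤ p.2}, φ (p.1 - u) * φ (p.2 - u) *
          (φ u * (F p.2 - F u) + φ p.2 * (F u - Θ u)) := integral_integral_swap h3S
    _ = ∫ u, ∫ s, F s * φ s * (φ u * (F (s + u) - F u) + φ (s + u) * (F u - Θ u)) := by
        refine integral_congr_ae ?_
        filter_upwards [h3.prod_left_ae] with u hu
        have hu' := hu.indicator hS
        rw [← integral_indicator hS, Measure.volume_eq_prod, integral_prod_symm _ hu',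
          ← integral_add_right_eq_self _ u]
        congr 1
        ext s
        have : ∀ x : ℝ, {p : ℝ × ℝ | p.1 ≤ p.2}.indicator (fun p : ℝ × ℝ =>
            φ (p.1 - u) * φ (p.2 - u) * (φ u * (F p.2 - F u) + φ p.2 * (F u - Θ u)))
              (x, s + u) = (Iic (s + u)).indicator (fun x => φ (x - u)) x *
                (φ s * (φ u * (F (s + u) - F u) + φ (s + u) * (F u - Θ u))) := by
          intro x
          by_cases hx : x ≤ s + u
          · simp [hx, mul_assoc]
          · simp [hx]
        simp_rw [this]
        rw [integral_mul_const, integral_indicator measurableSet_Iic,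
          integral_Iic_translate hF, add_sub_cancel_right]
        ring
    _ = ∫ s, ∫ u, F s * φ s * (φ u * (F (s + u) - F u) + φ (s + u) * (F u - Θ u)) :=
        integral_integral_swap (integrable_pair hc hFc hφsupp hΘ)
    _ = ∫ s, F s * φ s * (F s - 1 / 2) := by
        congr 1
        ext s
        rw [integral_const_mul, inner_integral hc hφsupp hφint hF hΘ]
end

section
/- With the cellular product m and the trilinear homotopy h defined in the context, the product m is associative up to the chain homotopy h: for all homogeneous a, b, c ∈ C (each lying in C⁰ or C¹, with degrees |a|, |b|, |c| ∈ {0,1}), one has d(h(a,b,c)) + h(da, b, c) + (−1)^{|a|} h(a, db, c) + (−1)^{|a|+|b|} h(a, b, dc) = m(a, m(b,c)) − m(m(a,b), c), where d is the cellular differential (extended by zero on C¹) applied both to the output of h and to each tensor factor with the Koszul signs shown. (This is the verification, in the proof of the discrete nonexistence theorem, that the chosen 0-quasilocal homotopy controlling associativity has the required differential.) -/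
/-- The cellular differential on a homogeneous element of degree `i`: for `i = 0` it
is `(d f)(x) = f(x+1) − f(x)`; it vanishes in degrees `≥ 1` (in particular on `C¹`). -/
noncomputable def cellD (N : ℕ) (i : ℕ) (u : ZMod N → ℝ) : ZMod N → ℝ :=
  if i = 0 then fun x => u (x + 1) - u x else 0

/-- The cellular product on homogeneous elements of degrees `i` and `j`:
`m(f,f′)(x) = f(x)·f′(x)` for two `0`-cochains, `m(f,g)(x) = m(g,f)(x) =
((f(x)+f(x+1))/2)·g(x)` for a `0`-cochain `f` and a `1`-cochain `g`, and `0` when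
both factors have degree `1` (the output would have degree `2`). -/
noncomputable def cellM (N : ℕ) (i : ℕ) (u : ZMod N → ℝ) (j : ℕ) (v : ZMod N → ℝ) :
    ZMod N → ℝ :=
  if i = 0 ∧ j = 0 then fun x => u x * v x
  else if i = 0 ∧ j = 1 then fun x => ((u x + u (x + 1)) / 2) * v x
  else if i = 1 ∧ j = 0 then fun x => ((v x + v (x + 1)) / 2) * u x
  else 0

/-- The trilinear homotopy controlling associativity, on homogeneous elements of
degrees `i`, `j`, `k`; it is zero except on triples containing exactly two
degree-one entries. -/
noncomputable def cellH (N : ℕ) (i : ℕ) (a : ZMod N → ℝ) (j : ℕ) (b : ZMod N → ℝ)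
    (k : ℕ) (c : ZMod N → ℝ) : ZMod N → ℝ :=
  if i = 1 ∧ j = 1 ∧ k = 0 then fun x => (1 / 12) * a x * b x * (c x - c (x + 1))
  else if i = 1 ∧ j = 0 ∧ k = 1 then fun x => (1 / 6) * a x * c x * (b x - b (x + 1))
  else if i = 0 ∧ j = 1 ∧ k = 1 then fun x => (1 / 12) * b x * c x * (a x - a (x + 1))
  else 0

/-- The cellular product is associative up to the chain homotopy `cellH`:
`d(h(a,b,c)) + h(da,b,c) + (−1)^{|a|} h(a,db,c) + (−1)^{|a|+|b|} h(a,b,dc)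
  = m(a, m(b,c)) − m(m(a,b), c)`
for all homogeneous `a`, `b`, `c` of degrees `|a|, |b|, |c| ∈ {0,1}`. -/
theorem cellular_product_associative_up_to_homotopy
    (N : ℕ) (i j k : ℕ) (hi : i ≤ 1) (hj : j ≤ 1) (hk : k ≤ 1)
    (a b c : ZMod N → ℝ) :
    cellD N (i + j + k - 1) (cellH N i a j b k c)
      + cellH N (i + 1) (cellD N i a) j b k c
      + ((-1 : ℝ) ^ i) • cellH N i a (j + 1) (cellD N j b) k c
      + ((-1 : ℝ) ^ (i + j)) • cellH N i a j b (k + 1) (cellD N k c)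
    = cellM N i a (j + k) (cellM N j b k c) - cellM N (i + j) (cellM N i a j b) k c := by
  -- Only the degree triples with a single `1` are nontrivial. Write `α x = a (x+1) - a x`, and
  -- likewise `β` and `γ` for `b` and `c`. For degrees `(1,0,0)` both sides are
  -- `a β γ / 4 = (1/12 + 1/6) a β γ`, for `(0,1,0)` both are `0 = (-1/12 + 1/12) α b γ`, and for
  -- `(0,0,1)` both are `-(1/6 + 1/12) α β c = -α β c / 4`. In degree `(0,0,0)` the pointwise
  -- product is associative and `cellH` is zero, so the truncated `0 - 1` does not matter; with two
  -- or more degree-one entries every term vanishes.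
  interval_cases i <;> interval_cases j <;> interval_cases k <;>
    ext x <;> simp [cellD, cellM, cellH] <;> ring
end
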